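/- For all (b,c) ∈ ℤ_{≥0}² and all (r,s,t,u) ∈ ℤ_{≥0}⁴: if the coefficient of the monomial x^r y^s z^t w^u in Q_{b,c} is nonzero, then u ≥ t, 2r ≥ s, b − s + 2t − u ≥ 0 and c − r + s − t ≥ 0. -/

import Mathlib

noncomputable section

open MvPolynomial

/-- The field `K = ℚ(q)` of rational functions in `q` over `ℚ`. -/
abbrev K : Type := RatFunc ℚ

/-- The variable `q ∈ K = ℚ(q)`. -/
def q : K := RatFunc.X

/-- The polynomial ring `K[x,y,z,w]`. -/
abbrev P4 : Type := MvPolynomial (Fin 4) K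

def xP : P4 := X 0
def yP : P4 := X 1
def zP : P4 := X 2
def wP : P4 := X 3

/-- The `K`-algebra map `K[x,y,z,w] → K[x,y,z,w]` rescaling the variables:
`x ↦ q^a·x`, `y ↦ q^b·y`, `z ↦ q^c·z`, `w ↦ q^d·w`. -/
def scl (a b c d : ℤ) : P4 →ₐ[K] P4 :=
  aeval ![C (q ^ a) * X 0, C (q ^ b) * X 1, C (q ^ c) * X 2, C (q ^ d) * X 3]

/-- The polynomials `Q_{b,0}(x,y,z,w)`, defined by the recursion (rec1) of the paper. -/
def Qb0 : ℕ → P4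
  | 0 => 1
  | b + 1 =>
      C (q ^ (4 * (b : ℤ))) * wP * yP * (zP - 1) * scl 0 0 (-4) 0 (Qb0 b)
    + C (q ^ (4 * (b : ℤ))) * wP * xP * (yP - 1) * yP * zP * scl 0 (-2) 0 0 (Qb0 b)
    + C (q ^ (6 * (b : ℤ))) * (wP - 1) * (yP - 1) * scl 0 (-2) 0 (-2) (Qb0 b)
    + C (q ^ (4 * (b : ℤ))) * wP * (xP - 1) * yP * (zP - 1) * scl (-4) 2 (-4) 0 (Qb0 b)
    + C (q ^ (6 * (b : ℤ))) * (wP - 1) * (xP - 1) * yP * scl (-4) 0 0 (-2) (Qb0 b)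

/-- The polynomials `Q_{b,c}(x,y,z,w)`: for `c ≥ 1` they are defined by the
recursion (rec2) of the paper, lowering `c`; for `c = 0` by `Qb0`. -/
def Q : ℕ → ℕ → P4
  | b, 0 => Qb0 b
  | b, c + 1 =>
      - (C (q ^ (4 * (b : ℤ) + 8 * (c : ℤ))) * wP ^ 2 * yP * (zP - 1) * zP)
          * scl 0 0 (-4) 0 (Q b c)
    + (C (q ^ (4 * (b : ℤ) + 4 * (c : ℤ) - 2)) * wP * xP * (yP - 1) * zP)
          * (C (q ^ (2 * (b : ℤ) + 4 * (c : ℤ) + 4)) - C (q ^ (2 : ℤ)) * wP * yP * zP)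
          * scl 0 (-2) 0 0 (Q b c)
    - (C (q ^ (6 * (b : ℤ) + 8 * (c : ℤ))) * (wP - 1) * wP * (yP - 1) * zP)
          * scl 0 (-2) 0 (-2) (Q b c)
    + (C (q ^ (4 * (b : ℤ) + 8 * (c : ℤ) - 2)) * wP * (xP - 1) * (zP - 1))
          * (C (q ^ (2 * (b : ℤ) + 4 * (c : ℤ) + 4)) - C (q ^ (2 : ℤ)) * wP * yP * zP)
          * scl (-4) 2 (-4) 0 (Q b c)
    + (C (q ^ (6 * (b : ℤ) + 8 * (c : ℤ) - 2)) * (wP - 1) * (xP - 1))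
          * (C (q ^ (2 * (b : ℤ) + 4 * (c : ℤ) + 4)) - C (q ^ (2 : ℤ)) * wP * yP * zP)
          * scl (-4) 0 0 (-2) (Q b c)

/-!
On a monomial `m = x^r y^s z^t w^u` the rescalings in either recursion are scalars, so one step of
the recursion multiplies `m` by a polynomial whose coefficients depend on `r, s, t, u` only through
`δ₁ = q^(2(2r - s))`, `δ₂ = q^(2(b - s + 2t - u))`, `δ₃ = q^(4(c - r + s - t))`, up to a common
power of `q`. Collect that polynomial by monomials. Every term that lowers the slack of the
inequality `2r ≥ s` has the factor `δ₁ - 1`, which vanishes when that inequality is tight at `m`;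
the last two inequalities, whose slacks also gain the increase of `b` or `c`, behave in the same way
with `δ₂ - 1` and `δ₃ - 1`. In each case the slack drops by at most one. No term lowers the slack of
`u ≥ t`.
-/

/-- The exponents `(r, s, t, u)` that the theorem allows in `Q_{b,c}`, with the inequalities written
without subtraction. -/
def exponentRegion (b c : ℕ) : Set (Fin 4 →₀ ℕ) :=
  {m | m 2 ≤ m 3 ∧ m 1 ≤ 2 * m 0 ∧ m 1 + m 3 ≤ b + 2 * m 2 ∧ m 0 + m 2 ≤ c + m 1}

/-- The exponent vector `(r, s, t, u)`, in the form used by the statement of the theorem. -/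
abbrev exponent (r s t u : ℕ) : Fin 4 →₀ ℕ := Finsupp.equivFunOnFinite.symm ![r, s, t, u]

/-- The monomial `x^r y^s z^t w^u`. -/
def mon (r s t u : ℕ) : P4 := monomial (exponent r s t u) 1

theorem exponent_mem_exponentRegion {b c r s t u : ℕ} :
    exponent r s t u ∈ exponentRegion b c ↔
      t ≤ u ∧ s ≤ 2 * r ∧ s + u ≤ b + 2 * t ∧ r + t ≤ c + s := Iff.rfl

theorem mon_eq (r s t u : ℕ) : mon r s t u = xP ^ r * yP ^ s * zP ^ t * wP ^ u := by
  simp [mon, monomial_eq, Finsupp.prod_fintype, Fin.prod_univ_four, xP, yP, zP, wP]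

theorem mon_mul_mon (r s t u r' s' t' u' : ℕ) :
    mon r s t u * mon r' s' t' u' = mon (r + r') (s + s') (t + t') (u + u') := by
  simp only [mon_eq]
  ring

theorem smul_mon_mem_restrictSupport {S : Set (Fin 4 →₀ ℕ)} {r s t u : ℕ} {κ : K}
    (h : κ ≠ 0 → exponent r s t u ∈ S) : κ • mon r s t u ∈ restrictSupport K S := by
  rw [mon, smul_monomial, monomial_mem_restrictSupport, smul_eq_mul, mul_one]
  tauto

theorem map_mem_of_forall_mon {S : Set (Fin 4 →₀ ℕ)} {T : P4 →ₗ[K] P4} {M : Submodule K P4}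
    (hT : ∀ r s t u, exponent r s t u ∈ S → T (mon r s t u) ∈ M)
    {p : P4} (hp : p ∈ restrictSupport K S) : T p ∈ M := by
  suffices restrictSupport K S ≤ M.comap T from this hp
  rw [restrictSupport_eq_span, Submodule.span_le, Set.image_subset_iff]
  intro m hm
  have hexp : exponent (m 0) (m 1) (m 2) (m 3) = m := by ext i; fin_cases i <;> rfl
  have h := hT (m 0) (m 1) (m 2) (m 3) (hexp.symm ▸ hm)
  rwa [mon, hexp] at h

theorem q_ne_zero : q ≠ 0 := RatFunc.X_ne_zero

theorem scl_mon (a b c d : ℤ) (r s t u : ℕ) :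
    scl a b c d (mon r s t u) = q ^ (a * r + b * s + c * t + d * u) • mon r s t u := by
  simp only [mon_eq, smul_eq_C_mul, scl, xP, yP, zP, wP, map_mul, map_pow, aeval_X,
    zpow_add₀ q_ne_zero, zpow_mul, zpow_natCast, Matrix.cons_val]
  ring

/-- The operator `p ↦ q^k · A · p(q^a x, q^b y, q^c z, q^d w)`, the shape of each summand of the
recursions. -/
def mulRescale (k : ℤ) (A : P4) (a b c d : ℤ) : P4 →ₗ[K] P4 :=
  q ^ k • LinearMap.mulLeft K A ∘ₗ (scl a b c d).toLinearMap

theorem mulRescale_apply (k : ℤ) (A : P4) (a b c d : ℤ) (p : P4) :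
    mulRescale k A a b c d p = C (q ^ k) * A * scl a b c d p := by
  simp [mulRescale, smul_eq_C_mul, mul_assoc]

theorem mulRescale_mon (k : ℤ) (A : P4) (a b c d : ℤ) (r s t u : ℕ) :
    mulRescale k A a b c d (mon r s t u) =
      q ^ (k + (a * r + b * s + c * t + d * u)) • (A * mon r s t u) := by
  rw [mulRescale_apply, scl_mon, mul_smul_comm, mul_assoc, ← smul_eq_C_mul, smul_smul,
    ← zpow_add₀ q_ne_zero, add_comm]

/-- The right-hand side of the recursion for `Q_{b+1,0}`, as a linear operator applied to
`Q_{b,0}`. -/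
def stepB (b : ℕ) : P4 →ₗ[K] P4 :=
  mulRescale (4 * b) (wP * yP * (zP - 1)) 0 0 (-4) 0
  + mulRescale (4 * b) (wP * xP * (yP - 1) * yP * zP) 0 (-2) 0 0
  + mulRescale (6 * b) ((wP - 1) * (yP - 1)) 0 (-2) 0 (-2)
  + mulRescale (4 * b) (wP * (xP - 1) * yP * (zP - 1)) (-4) 2 (-4) 0
  + mulRescale (6 * b) ((wP - 1) * (xP - 1) * yP) (-4) 0 0 (-2)

/-- The factor `q^(2(b + 2c)) - q² w y z` of the recursion for `Q_{b,c}`, with `c + 1` in place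
of `c`. -/
def stepCFactor (b c : ℕ) : P4 :=
  C (q ^ (2 * (b : ℤ) + 4 * c + 4)) - C (q ^ (2 : ℤ)) * wP * yP * zP

/-- The right-hand side of the recursion for `Q_{b,c+1}`, as a linear operator applied to
`Q_{b,c}`. -/
def stepC (b c : ℕ) : P4 →ₗ[K] P4 :=
  -mulRescale (4 * b + 8 * c) (wP ^ 2 * yP * (zP - 1) * zP) 0 0 (-4) 0
  + mulRescale (4 * b + 4 * c - 2) (wP * xP * (yP - 1) * zP * stepCFactor b c) 0 (-2) 0 0
  - mulRescale (6 * b + 8 * c) ((wP - 1) * wP * (yP - 1) * zP) 0 (-2) 0 (-2)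
  + mulRescale (4 * b + 8 * c - 2) (wP * (xP - 1) * (zP - 1) * stepCFactor b c) (-4) 2 (-4) 0
  + mulRescale (6 * b + 8 * c - 2) ((wP - 1) * (xP - 1) * stepCFactor b c) (-4) 0 0 (-2)

theorem Qb0_succ (b : ℕ) : Qb0 (b + 1) = stepB b (Qb0 b) := by
  simp only [Qb0, stepB, LinearMap.add_apply, mulRescale_apply]
  ring

theorem Q_succ (b c : ℕ) : Q b (c + 1) = stepC b c (Q b c) := by
  simp only [Q, stepC, stepCFactor, LinearMap.add_apply, LinearMap.sub_apply, LinearMap.neg_apply,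
    mulRescale_apply]
  ring

/-- The polynomial by which `stepB` multiplies a monomial, up to a power of `q`; the parameters are
those of `stepB_mon`. -/
def symbolB (δ₁ δ₂ δ₃ : K) : P4 :=
  (δ₁ * δ₂ * δ₃) • mon 0 0 0 0
  - (δ₁ * δ₂ * δ₃) • mon 0 0 0 1
  - (δ₂ * δ₃ * (δ₁ - 1)) • mon 0 1 0 0
  + (δ₃ * (δ₁ - 1) * (δ₂ - 1)) • mon 0 1 0 1
  + (δ₃ * (δ₁ - 1)) • mon 0 1 1 1
  - (δ₂ * δ₃) • mon 1 1 0 0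
  + (δ₃ * (δ₂ - 1)) • mon 1 1 0 1
  + (δ₃ - 1) • mon 1 1 1 1
  + (1 : K) • mon 1 2 1 1

/-- The polynomial by which `stepC` multiplies a monomial, up to a power of `q`; the parameters are
those of `stepC_mon`. -/
def symbolC (α β δ₁ δ₂ δ₃ : K) : P4 :=
  (α * δ₂ * δ₃) • mon 0 0 0 0
  - (α * δ₃ * (δ₂ - 1)) • mon 0 0 0 1
  - (α * δ₃ + β * δ₁ * δ₂ * δ₃) • mon 0 0 1 1
  + (β * δ₁ * δ₂ * δ₃) • mon 0 0 1 2
  + (β * δ₂ * δ₃ * (δ₁ - 1)) • mon 0 1 1 1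
  - (β * δ₃ * (δ₁ - 1) * (δ₂ - 1)) • mon 0 1 1 2
  - (β * δ₃ * (δ₁ - 1)) • mon 0 1 2 2
  - (α * δ₂ * δ₃) • mon 1 0 0 0
  + (α * δ₃ * (δ₂ - 1)) • mon 1 0 0 1
  + (α * (δ₃ - 1)) • mon 1 0 1 1
  + (α + β * δ₂ * δ₃) • mon 1 1 1 1
  - (β * δ₃ * (δ₂ - 1)) • mon 1 1 1 2
  - (β * (δ₃ - 1)) • mon 1 1 2 2
  - β • mon 1 2 2 2

theorem smul_symbolB_mul (a δ₁ δ₂ δ₃ : K) (p : P4) :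
    a • (symbolB δ₁ δ₂ δ₃ * p) =
      (a * δ₁ * δ₃) • (wP * yP * (zP - 1) * p)
      + a • (wP * xP * (yP - 1) * yP * zP * p)
      + (a * δ₁ * δ₂ * δ₃) • ((wP - 1) * (yP - 1) * p)
      + (a * δ₃) • (wP * (xP - 1) * yP * (zP - 1) * p)
      + (a * δ₂ * δ₃) • ((wP - 1) * (xP - 1) * yP * p) := by
  simp only [symbolB, mon_eq, smul_eq_C_mul, map_mul, map_sub, map_one]
  ring

theorem smul_symbolC_mul (a α β δ₁ δ₂ δ₃ : K) (p : P4) :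
    a • (symbolC α β δ₁ δ₂ δ₃ * p) =
      -((a * β * δ₁ * δ₃) • (wP ^ 2 * yP * (zP - 1) * zP * p))
      + a • (wP * xP * (yP - 1) * zP * (C α - C β * wP * yP * zP) * p)
      - (a * β * δ₁ * δ₂ * δ₃) • ((wP - 1) * wP * (yP - 1) * zP * p)
      + (a * δ₃) • (wP * (xP - 1) * (zP - 1) * (C α - C β * wP * yP * zP) * p)
      + (a * δ₂ * δ₃) • ((wP - 1) * (xP - 1) * (C α - C β * wP * yP * zP) * p) := by
  simp only [symbolC, mon_eq, smul_eq_C_mul, map_mul, map_add, map_sub, map_one]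
  ring

theorem stepB_mon (b r s t u : ℕ) :
    stepB b (mon r s t u) =
      q ^ (4 * b - 2 * s : ℤ) •
        (symbolB (q ^ (2 * (2 * r - s) : ℤ)) (q ^ (2 * (b - s + 2 * t - u) : ℤ))
          (q ^ (4 * (-r + s - t) : ℤ)) * mon r s t u) := by
  simp only [stepB, LinearMap.add_apply, mulRescale_mon, smul_symbolB_mul,
    ← zpow_add₀ q_ne_zero]
  -- `ring` would not normalise the integer exponents of `q`.
  ring_nf

theorem stepC_mon (b c r s t u : ℕ) :
    stepC b c (mon r s t u) =
      q ^ (4 * b + 4 * c - 2 - 2 * s : ℤ) •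
        (symbolC (q ^ (2 * b + 4 * c + 4 : ℤ)) (q ^ (2 : ℤ)) (q ^ (2 * (2 * r - s) : ℤ))
          (q ^ (2 * (b - s + 2 * t - u) : ℤ)) (q ^ (4 * (c - r + s - t) : ℤ)) * mon r s t u) := by
  simp only [stepC, stepCFactor, LinearMap.add_apply, LinearMap.sub_apply, LinearMap.neg_apply,
    mulRescale_mon, smul_symbolC_mul, ← zpow_add₀ q_ne_zero]
  ring_nf

section Facets

variable {b c r s t u : ℕ} {δ₁ δ₂ δ₃ : K}

theorem symbolB_mul_mon_mem (hm : exponent r s t u ∈ exponentRegion b c)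
    (h₁ : 2 * r = s → δ₁ = 1) (h₂ : b + 2 * t = s + u → δ₂ = 1) (h₃ : c + s = r + t → δ₃ = 1) :
    symbolB δ₁ δ₂ δ₃ * mon r s t u ∈ restrictSupport K (exponentRegion (b + 1) c) := by
  rw [exponent_mem_exponentRegion] at hm
  simp only [symbolB, add_mul, sub_mul, smul_mul_assoc, mon_mul_mon]
  repeat' first | apply add_mem | apply sub_mem
  -- A term leaves the region only at a facet, where one of its factors `δᵢ - 1` is zero.
  all_goals
    refine smul_mon_mem_restrictSupport fun hκ ↦ exponent_mem_exponentRegion.mpr ?_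
    grind

theorem symbolC_mul_mon_mem (α β : K) (hm : exponent r s t u ∈ exponentRegion b c)
    (h₁ : 2 * r = s → δ₁ = 1) (h₂ : b + 2 * t = s + u → δ₂ = 1) (h₃ : c + s = r + t → δ₃ = 1) :
    symbolC α β δ₁ δ₂ δ₃ * mon r s t u ∈ restrictSupport K (exponentRegion b (c + 1)) := by
  rw [exponent_mem_exponentRegion] at hm
  simp only [symbolC, add_mul, sub_mul, smul_mul_assoc, mon_mul_mon]
  repeat' first | apply add_mem | apply sub_mem
  all_goals
    refine smul_mon_mem_restrictSupport fun hκ ↦ exponent_mem_exponentRegion.mpr ?_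
    grind

end Facets

theorem stepB_mem_restrictSupport {b : ℕ} {p : P4}
    (hp : p ∈ restrictSupport K (exponentRegion b 0)) :
    stepB b p ∈ restrictSupport K (exponentRegion (b + 1) 0) := by
  refine map_mem_of_forall_mon (fun r s t u hm ↦ ?_) hp
  rw [stepB_mon]
  refine Submodule.smul_mem _ _ (symbolB_mul_mon_mem hm ?_ ?_ ?_) <;>
    exact fun h ↦ zpow_zero q ▸ congrArg (q ^ ·) (by lia)

theorem stepC_mem_restrictSupport {b c : ℕ} {p : P4}
    (hp : p ∈ restrictSupport K (exponentRegion b c)) :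
    stepC b c p ∈ restrictSupport K (exponentRegion b (c + 1)) := by
  refine map_mem_of_forall_mon (fun r s t u hm ↦ ?_) hp
  rw [stepC_mon]
  refine Submodule.smul_mem _ _ (symbolC_mul_mon_mem _ _ hm ?_ ?_ ?_) <;>
    exact fun h ↦ zpow_zero q ▸ congrArg (q ^ ·) (by lia)

theorem Qb0_mem_restrictSupport (b : ℕ) : Qb0 b ∈ restrictSupport K (exponentRegion b 0) := by
  induction b with
  | zero =>
    rw [Qb0, one_def, monomial_mem_restrictSupport]
    simp [exponentRegion]
  | succ b ih =>
    rw [Qb0_succ]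
    exact stepB_mem_restrictSupport ih

theorem Q_mem_restrictSupport (b c : ℕ) : Q b c ∈ restrictSupport K (exponentRegion b c) := by
  induction c with
  | zero =>
    rw [Q]
    exact Qb0_mem_restrictSupport b
  | succ c ih =>
    rw [Q_succ]
    exact stepC_mem_restrictSupport ih

/-- if the coefficient of `x^r y^s z^t w^u` in `Q_{b,c}` is nonzero
then `u ≥ t`, `2r ≥ s`, `b − s + 2t − u ≥ 0` and `c − r + s − t ≥ 0`. -/
theorem Q_support (b c r s t u : ℕ)
    (h : MvPolynomial.coeff (Finsupp.equivFunOnFinite.symm ![r, s, t, u]) (Q b c) ≠ 0) :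
    t ≤ u ∧ s ≤ 2 * r ∧ s + u ≤ b + 2 * t ∧ r + t ≤ c + s := by
  exact exponent_mem_exponentRegion.mp
    ((mem_restrictSupport_iff K).mp (Q_mem_restrictSupport b c) (mem_support_iff.mpr h))
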